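/- $\sum_{n\geq 0} \frac{\binom{2n}{n}}{(2n+1)^2 (-16)^n}\left(5 H_{2n+1} + \frac{12}{2n+1}\right) = 14\,\zeta(3)$. -/

import Mathlib

open Filter Topology

/-- Harmonic number `H_n = ∑_{k=1}^n 1/k`. -/
noncomputable def H (n : ℕ) : ℝ := ∑ k ∈ Finset.range n, 1 / ((k:ℝ) + 1)

/-- The Riemann zeta value `ζ(s) = ∑_{n ≥ 1} 1/n^s`. -/
noncomputable def zeta (s : ℕ) : ℝ := ∑' n : ℕ, 1 / ((n:ℝ) + 1) ^ s

lemma H_succ (n : ℕ) : H (n+1) = H n + 1 / ((n:ℝ)+1) := by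
  unfold H; rw [Finset.sum_range_succ]

lemma H_nonneg (n : ℕ) : 0 ≤ H n := by
  unfold H; positivity

lemma H_mono : Monotone H := by
  refine monotone_nat_of_le_succ fun n => ?_
  rw [H_succ]
  have : (0:ℝ) ≤ 1 / ((n:ℝ)+1) := by positivity
  linarith

/-- The Pochhammer symbol `(1/2)_k`. -/
noncomputable def cc : ℕ → ℝ
  | 0 => 1
  | (k+1) => cc k * ((k:ℝ) + 1/2)

lemma cc_nonneg (k : ℕ) : 0 ≤ cc k := by
  induction k with
  | zero => simp [cc]
  | succ k ih => rw [cc]; positivity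

lemma cc_le (k : ℕ) : cc k ≤ (k.factorial : ℝ) := by
  induction k with
  | zero => simp [cc]
  | succ k ih =>
    rw [cc, Nat.factorial_succ]; push_cast
    have := cc_nonneg k
    have hk : (0:ℝ) ≤ k := by positivity
    nlinarith

lemma cc_eq (k : ℕ) : cc k = ((2*k).factorial : ℝ) / (4^k * k.factorial) := by
  induction k with
  | zero => simp [cc]
  | succ k ih =>
    rw [cc, ih, show 2*(k+1) = 2*k+1+1 by ring, Nat.factorial_succ, Nat.factorial_succ,
      Nat.factorial_succ]
    push_cast
    have : (k.factorial : ℝ) ≠ 0 := by positivity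
    field_simp
    ring

lemma cc_sq (k : ℕ) : cc k ^ 2 = ((2*k).choose k : ℝ) * (2*k).factorial / 16^k := by
  have h : (((2*k).choose k : ℕ) : ℝ) * k.factorial * k.factorial = (2*k).factorial := by
    have := Nat.choose_mul_factorial_mul_factorial (show k ≤ 2*k by omega)
    rw [show 2*k-k = k by omega] at this
    exact_mod_cast this
  have h0 : (k.factorial : ℝ) ≠ 0 := by positivity
  rw [cc_eq, ← h, show (16:ℝ) = 4^2 by norm_num, ← pow_mul, mul_comm 2 k, pow_mul]
  field_simp

/-- First member of the WZ pair. -/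
noncomputable def FF (n k : ℕ) : ℝ :=
  (-1)^k * cc k ^ 2 * (n-k-1).factorial / ((n+k).factorial * ((k:ℝ)+1/2)) * (H (n-k-1) - H (n+k))

/-- Second member of the WZ pair. -/
noncomputable def GG (n k : ℕ) : ℝ :=
  2 * (-1)^k * cc k ^ 2 * (n-k).factorial / ((n+k).factorial * ((n:ℝ)+1/2)^2) *
    (H (n-k) - H (n+k) - 2 / ((n:ℝ)+1/2))

lemma wz (n k : ℕ) (h : k < n) : FF (n+1) k - FF n k = GG n (k+1) - GG n k := by
  obtain ⟨m, rfl⟩ : ∃ m, n = k + 1 + m := ⟨n - (k+1), by omega⟩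
  unfold FF GG
  rw [show k+1+m+1-k-1 = m+1 by omega, show k+1+m-k-1 = m by omega,
    show k+1+m-(k+1) = m by omega, show k+1+m-k = m+1 by omega,
    show k+1+m+1+k = 2*k+1+m+1 by omega, show k+1+m+k = 2*k+1+m by omega,
    show k+1+m+(k+1) = 2*k+1+m+1 by omega, H_succ, H_succ, cc, Nat.factorial_succ,
    Nat.factorial_succ, pow_succ (-1:ℝ) k]
  have h1 : (m.factorial : ℝ) ≠ 0 := by positivity
  have h2 : ((2*k+1+m).factorial : ℝ) ≠ 0 := by positivity
  push_cast
  generalize (m.factorial : ℝ) = A at *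
  generalize ((2*k+1+m).factorial : ℝ) = B at *
  generalize H m = x
  generalize H (2*k+1+m) = y
  generalize (-1:ℝ)^k = s
  generalize cc k = c
  have e1 : (2*(k:ℝ)+1+m+1) ≠ 0 := by positivity
  have e2 : ((k:ℝ)+1/2) ≠ 0 := by positivity
  have e3 : ((k:ℝ)+1+m+1/2) ≠ 0 := by positivity
  have e4 : ((m:ℝ)+1) ≠ 0 := by positivity
  have e5 : (2*(k:ℝ)+1) ≠ 0 := by positivity
  have e6 : (2*((k:ℝ)+1+m)+1) ≠ 0 := by positivity
  field_simp
  ring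

lemma key (N : ℕ) : ∑ n ∈ Finset.range N, GG n 0 =
    ∑ n ∈ Finset.range N, (FF (n+1) n + GG n n) - ∑ k ∈ Finset.range N, FF N k := by
  induction N with
  | zero => simp
  | succ N ih =>
    have h : ∑ k ∈ Finset.range N, (FF (N+1) k - FF N k) = GG N N - GG N 0 := by
      rw [← Finset.sum_range_sub]
      exact Finset.sum_congr rfl fun k hk => wz N k (Finset.mem_range.1 hk)
    rw [Finset.sum_sub_distrib] at h
    rw [Finset.sum_range_succ, Finset.sum_range_succ, Finset.sum_range_succ, ih]
    linarith

lemma diag (n : ℕ) : FF (n+1) n + GG n n = -2 * (((2*n).choose n : ℝ) / ((2*(n:ℝ)+1)^2 * (-16)^n) *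
        (5 * H (2*n+1) + 12 / (2*(n:ℝ)+1))) := by
  unfold FF GG
  rw [show n+1-n-1 = 0 by omega, show n - n = 0 by omega, show n+1+n = 2*n+1 by omega,
    show n + n = 2*n by omega, H_succ, Nat.factorial_succ, cc_sq,
    show (-16:ℝ)^n = (-1)^n * 16^n by rw [← mul_pow]; norm_num]
  have h0 : H 0 = 0 := by simp [H]
  have h2 : ((2*n).factorial : ℝ) ≠ 0 := by positivity
  have h3 : ((-1:ℝ)^n) * (-1)^n = 1 := by rw [← mul_pow]; norm_num
  have h4 : 1 / ((-1:ℝ)^n) = (-1)^n := by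
    rw [div_eq_iff (by positivity)]; exact h3.symm
  have h5 : ∀ a b c : ℝ, a / (b * ((-1)^n * c)) = (-1)^n * (a / (b * c)) := by
    intro a b c
    rw [← h4]; field_simp
    rw [← pow_mul] <;> simp
  rw [h0, h5]
  push_cast
  generalize ((2*n).factorial : ℝ) = B at *
  have e5 : (2*(n:ℝ)+1) ≠ 0 := by positivity
  have e6 : ((n:ℝ)+1/2) ≠ 0 := by positivity
  simp only [Nat.factorial_zero, Nat.cast_one]
  field_simp
  ring

lemma GG_zero (n : ℕ) : GG n 0 = -32 * (1 / (2*(n:ℝ)+1)^3) := by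
  unfold GG
  have h2 : (n.factorial : ℝ) ≠ 0 := by positivity
  have e5 : (2*(n:ℝ)+1) ≠ 0 := by positivity
  have e6 : ((n:ℝ)+1/2) ≠ 0 := by positivity
  simp only [Nat.sub_zero, Nat.add_zero, cc]
  field_simp
  ring

lemma FF_bound (N k : ℕ) (h : k < N) : |FF N k| ≤ 2 * H (2*N) / (N:ℝ)^2 := by
  have hN : (0:ℝ) < N := by exact_mod_cast (by omega : 0 < N)
  have hH1 : 1 ≤ H (2*N) := by
    have : H 1 ≤ H (2*N) := H_mono (by omega)
    simpa [H] using this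
  rcases Nat.eq_zero_or_pos k with rfl | hk
  · obtain ⟨m, rfl⟩ : ∃ m, N = m + 1 := ⟨N - 1, by omega⟩
    have : FF (m+1) 0 = - (2 / ((m+1 : ℕ):ℝ)^2) := by
      unfold FF
      have h2 : (m.factorial : ℝ) ≠ 0 := by positivity
      have e5 : ((m:ℝ)+1) ≠ 0 := by positivity
      simp only [Nat.sub_zero, Nat.add_zero, cc, Nat.add_sub_cancel, Nat.factorial_succ, H_succ]
      push_cast
      field_simp
      ring
    rw [this, abs_neg, abs_of_nonneg (by positivity)]
    gcongr
    linarith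
  · have hH : |H (N-k-1) - H (N+k)| ≤ H (2*N) := by
      have h1 := H_nonneg (N-k-1)
      have h2 : H (N-k-1) ≤ H (N+k) := H_mono (by omega)
      have h3 : H (N+k) ≤ H (2*N) := H_mono (by omega)
      rw [abs_le]; constructor <;> linarith
    have hc : cc k ^ 2 * (N-k-1).factorial * (N:ℝ)^2 ≤ (N+k).factorial * ((k:ℝ)+1/2) := by
      have a1 : cc k ^ 2 ≤ (k.factorial:ℝ)^2 := by
        have := cc_nonneg k
        have := cc_le k
        gcongr
      have a2 : k.factorial^2 * (N-k-1).factorial * N^2 ≤ (N+k).factorial * k := by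
        obtain ⟨j, rfl⟩ : ∃ j, k = j + 1 := ⟨k - 1, by omega⟩
        obtain ⟨m, rfl⟩ : ∃ m, N = j + 1 + m + 1 := ⟨N - (j+2), by omega⟩
        rw [show j+1+m+1-(j+1)-1 = m by omega,
          show j+1+m+1+(j+1) = (j + (j+1+m)) + 1 + 1 by omega]
        have b1 : (j+1).factorial * m.factorial ≤ (j+1+m).factorial :=
          Nat.le_of_dvd (Nat.factorial_pos _) (Nat.factorial_mul_factorial_dvd_factorial_add _ _)
        have b2 : j.factorial * (j+1+m).factorial ≤ (j+(j+1+m)).factorial :=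
          Nat.le_of_dvd (Nat.factorial_pos _) (Nat.factorial_mul_factorial_dvd_factorial_add _ _)
        calc (j+1).factorial^2 * m.factorial * (j+1+m+1)^2
            = (j+1) * (j.factorial * ((j+1).factorial * m.factorial)) * (j+1+m+1)^2 := by
              rw [Nat.factorial_succ j]; ring
          _ ≤ (j+1) * (j+(j+1+m)).factorial * ((j+(j+1+m)+1+1) * (j+(j+1+m)+1)) := by
              apply Nat.mul_le_mul
              · apply Nat.mul_le_mul_left
                exact (Nat.mul_le_mul_left _ b1).trans b2
              · rw [sq]; apply Nat.mul_le_mul <;> omega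
          _ = _ := by rw [Nat.factorial_succ, Nat.factorial_succ]; ring
      have a3 : (k.factorial:ℝ)^2 * (N-k-1).factorial * (N:ℝ)^2 ≤ (N+k).factorial * k := by
        exact_mod_cast a2
      calc _ ≤ (k.factorial:ℝ)^2 * (N-k-1).factorial * (N:ℝ)^2 := by gcongr
        _ ≤ _ := a3
        _ ≤ _ := by gcongr; linarith
    have hd : |(-1)^k * cc k ^ 2 * (N-k-1).factorial / ((N+k).factorial * ((k:ℝ)+1/2))|
        ≤ 1 / (N:ℝ)^2 := by
      have : |(-1)^k * cc k ^ 2 * (N-k-1).factorial / ((N+k).factorial * ((k:ℝ)+1/2))|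
        = cc k ^ 2 * (N-k-1).factorial / ((N+k).factorial * ((k:ℝ)+1/2)) := by
        rw [mul_assoc, mul_div_assoc, abs_mul, abs_pow, abs_neg, abs_one, one_pow, one_mul]
        exact abs_of_nonneg (by positivity)
      rw [this, div_le_div_iff₀ (by positivity) (by positivity)]
      linarith
    unfold FF
    rw [abs_mul]
    calc _ ≤ 1 / (N:ℝ)^2 * H (2*N) := by gcongr
      _ = H (2*N) / (N:ℝ)^2 := by ring
      _ ≤ _ := by gcongr; linarith

lemma tendsto_T : Tendsto (fun N => ∑ k ∈ Finset.range N, FF N k) atTop (𝓝 0) := by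
  have h1 : Tendsto (fun n : ℕ => (n:ℝ)⁻¹ * H n) atTop (𝓝 0) :=
    (tendsto_one_div_add_atTop_nhds_zero_nat (𝕜 := ℝ)).cesaro
  have h2 : Tendsto (fun N : ℕ => 2 * N) atTop atTop :=
    tendsto_id.const_mul_atTop' (by norm_num)
  have h3 := ((h1.comp h2).const_mul 4)
  rw [mul_zero] at h3
  refine squeeze_zero_norm' ?_ h3
  filter_upwards [eventually_gt_atTop 0] with N hN
  have hN' : (0:ℝ) < N := by exact_mod_cast hN
  calc ‖∑ k ∈ Finset.range N, FF N k‖ ≤ ∑ k ∈ Finset.range N, ‖FF N k‖ := norm_sum_le _ _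
    _ ≤ ∑ k ∈ Finset.range N, 2 * H (2*N) / (N:ℝ)^2 :=
        Finset.sum_le_sum fun k hk => FF_bound N k (Finset.mem_range.1 hk)
    _ = _ := by
      simp only [Finset.sum_const, Finset.card_range, nsmul_eq_mul, Function.comp]
      push_cast
      field_simp
      ring

lemma odd_sum : Tendsto (fun N => ∑ n ∈ Finset.range N, 1 / (2*(n:ℝ)+1)^3) atTop
    (𝓝 (7/8 * zeta 3)) := by
  have hs : Summable (fun n : ℕ => 1 / ((n:ℝ)+1)^3) := by
    have := (summable_nat_add_iff 1).2 (Real.summable_one_div_nat_pow.2 (by norm_num : 1 < 3))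
    simpa using this
  obtain ⟨f, hf⟩ : ∃ f : ℕ → ℝ, f = fun n : ℕ => 1 / ((n:ℝ)+1)^3 := ⟨_, rfl⟩
  rw [← hf] at hs
  have he : Summable (fun n : ℕ => f (2*n)) :=
    hs.comp_injective (i := fun n : ℕ => 2*n) (fun a b h => by
      have h' : 2*a = 2*b := h
      omega)
  have ho : Summable (fun n : ℕ => f (2*n+1)) :=
    hs.comp_injective (i := fun n : ℕ => 2*n+1) (fun a b h => by
      have h' : 2*a+1 = 2*b+1 := h
      omega)
  have ht := tsum_even_add_odd he ho
  have hz3 : zeta 3 = ∑' n : ℕ, f n := by rw [hf]; rfl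
  rw [← hz3] at ht
  simp only [hf] at he ho ht
  have ho' : (∑' n : ℕ, 1 / (((2*n+1 : ℕ):ℝ)+1)^3) = 1/8 * zeta 3 := by
    unfold zeta
    rw [← tsum_mul_left]
    congr 1; ext n
    have : (n:ℝ)+1 ≠ 0 := by positivity
    push_cast
    rw [show 2*(n:ℝ)+1+1 = 2*(n+1) by ring]
    field_simp
    norm_num
  have hz : (∑' n : ℕ, 1 / (((2*n : ℕ):ℝ)+1)^3) = 7/8 * zeta 3 := by
    rw [ho'] at ht
    linarith
  have := he.hasSum.tendsto_sum_nat
  rw [hz] at this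
  simpa using this

theorem stmt_6 :
    Tendsto (fun N => ∑ n ∈ Finset.range N,
      ((2*n).choose n : ℝ) / ((2*(n:ℝ)+1)^2 * (-16)^n) *
        (5 * H (2*n+1) + 12 / (2*(n:ℝ)+1)))
      atTop (𝓝 (14 * zeta 3)) := by
  have h := (odd_sum.const_mul 16).sub (tendsto_T.const_mul (1/2))
  rw [show 16 * (7/8 * zeta 3) - 1/2 * 0 = 14 * zeta 3 by ring] at h
  refine h.congr fun N => ?_
  have hk := key N
  simp only [diag, GG_zero, ← Finset.mul_sum] at hk
  linarith
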